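/- Let U be a jet and 𝐅 = (F_a)_{a≤0} an extended non-linearity. Then U satisfies the algebraic fixed point equation U = U^P + 𝓘_0[𝐅(U)] if and only if U is coherent with 𝐅, i.e. U is of the planted form U = U^P + Σ_{τ∈𝔗^ex} u_{𝓘[τ]} 𝓘_0[τ]/τ! and u_{𝓘[τ]} = Υ^𝐅[τ](U^P, 0) for every τ ∈ 𝔗^ex. -/

import Mathlib

open MeasureTheory
open scoped Classical

noncomputable section

namespace RS

inductive Typ : Type
  | Xi : Typ
  | In : Typ
deriving DecidableEq

/-- multi-indices `ℕ^d` -/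
abbrev Nd (d : ℕ) := Fin d → ℕ

/-- edge types `ℰ = 𝔏 × ℕ^d` -/
abbrev ET (d : ℕ) := Typ × Nd d

/-- Decorated rooted trees (with an extended decoration `a : ℝ` at each node),
in the symbolic representation `𝟏^a X^k Ξ_L ∏_{(m,τ) ∈ B} 𝓘_m[τ]`.
Trees of the reduced structure are those with all extended decorations zero. -/
inductive Tr (d : ℕ) : Type
  | node (a : ℝ) (k : Nd d) (L : List (Nd d)) (B : List (Nd d × Tr d)) : Tr d

namespace Tr

instance {d} : DecidableEq (Tr d) := Classical.decEq _

variable {d : ℕ}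

/-- the tree product: join roots, add root decorations -/
def mul : Tr d → Tr d → Tr d
  | node a k L B, node a' k' L' B' => node (a + a') (k + k') (L ++ L') (B ++ B')

/-- the unit tree `𝟏` -/
def one (d : ℕ) : Tr d := node 0 0 [] []

/-- `X^k` -/
def Xpow (k : Nd d) : Tr d := node 0 k [] []

/-- `Ξ_l` -/
def Xi (l : Nd d) : Tr d := node 0 0 [l] []

/-- `𝓘_m[τ]` -/
def plant (m : Nd d) (τ : Tr d) : Tr d := node 0 0 [] [(m, τ)]

/-- `𝟏^a` -/
def oneA {d : ℕ} (a : ℝ) : Tr d := node a 0 [] []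

/-- the `𝔰`-degree of a multi-index -/
def degN (s : Fin d → ℝ) (k : Nd d) : ℝ := ∑ i, (k i : ℝ) * s i

mutual
  /-- the degree `|τ|_𝔰` (ignoring extended decorations) -/
  def deg (s : Fin d → ℝ) (cXi cI : ℝ) : Tr d → ℝ
    | node _ k L B => degN s k + (L.map fun l => cXi - degN s l).sum + degB s cXi cI B
  def degB (s : Fin d → ℝ) (cXi cI : ℝ) : List (Nd d × Tr d) → ℝ
    | [] => 0
    | y :: ys => (deg s cXi cI y.2 + cI - degN s y.1) + degB s cXi cI ys
end

mutual
  /-- sum of all extended decorations of a tree -/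
  def oSum : Tr d → ℝ
    | node a _ _ B => a + oSumB B
  def oSumB : List (Nd d × Tr d) → ℝ
    | [] => 0
    | y :: ys => oSum y.2 + oSumB ys
end

/-- the degree `|τ|₊ = |τ|_𝔰 + Σ_x 𝔬(x)` -/
def degp (s : Fin d → ℝ) (cXi cI : ℝ) (τ : Tr d) : ℝ := deg s cXi cI τ + oSum τ

/-- trees all of whose extended decorations vanish (i.e. trees of the reduced structure) -/
inductive ZeroO : Tr d → Prop
  | node {k : Nd d} {L : List (Nd d)} {B : List (Nd d × Tr d)} :
      (∀ y ∈ B, ZeroO y.2) → ZeroO (node 0 k L B)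

/-- the multiset `𝒩(τ)` of edge decorations at the root -/
def rootN : Tr d → Multiset (ET d)
  | node _ _ L B =>
      (↑(L.map fun l => ((Typ.Xi, l) : ET d)) : Multiset (ET d)) +
      (↑(B.map fun y => ((Typ.In, y.1) : ET d)) : Multiset (ET d))

/-- the polynomial decoration at the root -/
def rootK : Tr d → Nd d
  | node _ k _ _ => k

/-- the extended decoration at the root -/
def rootO : Tr d → ℝ
  | node a _ _ _ => a

/-- planted trees: `𝟏^a Ξ_l` or `𝟏^a 𝓘_m[σ]` -/
def Planted : Tr d → Prop
  | node _ k L B => k = 0 ∧ L.length + B.length = 1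

/-- a tree strongly conforms to a rule `R` if the multiset of outgoing edge
decorations at every node belongs to `R` -/
inductive Conforms (R : Set (Multiset (ET d))) : Tr d → Prop
  | node {a : ℝ} {k : Nd d} {L : List (Nd d)} {B : List (Nd d × Tr d)} :
      rootN (node a k L B) ∈ R → (∀ y ∈ B, Conforms R y.2) →
      Conforms R (node a k L B)

end Tr

/-- a rule is normal if it is closed under sub-multisets -/
def Normal {d : ℕ} (R : Set (Multiset (ET d))) : Prop :=
  ∀ A B : Multiset (ET d), A ≤ B → B ∈ R → A ∈ R

/-- `reg(N) = Σ_{(𝔱,k) ∈ N} (reg(𝔱) - |k|_𝔰)` -/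
def regMS {d : ℕ} (s : Fin d → ℝ) (reg : Typ → ℝ) (N : Multiset (ET d)) : ℝ :=
  (N.map fun o => reg o.1 - Tr.degN s o.2).sum

/-- subcriticality of a rule: there is `reg : 𝔏 → ℝ` with `reg(Ξ) < |Ξ|_𝔰` and
`reg(𝓘) < |𝓘|_𝔰 + inf_{N ∈ R} reg(N)` -/
def Subcritical {d : ℕ} (s : Fin d → ℝ) (cXi cI : ℝ) (R : Set (Multiset (ET d))) : Prop :=
  ∃ reg : Typ → ℝ, reg Typ.Xi < cXi ∧
    ∃ c : ℝ, (∀ N ∈ R, c ≤ regMS s reg N) ∧ reg Typ.In < cI + c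

/-- the set of strongly conforming trees of the reduced structure, `𝔗∘` -/
def Tcirc {d : ℕ} (R : Set (Multiset (ET d))) : Set (Tr d) :=
  {τ | Tr.ZeroO τ ∧ Tr.Conforms R τ}


/-- the factorial `k! = ∏ (k i)!` of a multi-index -/
def ndFact {d : ℕ} (k : Nd d) : ℕ := ∏ i, (k i).factorial

/-- the (finite, when `s i ≥ 1`) set `{k ∈ ℕ^d : |k|_𝔰 < c}` -/
def lowIdx {d : ℕ} (s : Fin d → ℝ) (c : ℝ) : Finset (Nd d) :=
  (Fintype.piFinset fun _ : Fin d => Finset.range (Nat.ceil (max c 0) + 1)).filter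
    fun k => Tr.degN s k < c


/-- non-linearities: functions `ℝ^ℰ → ℝ` -/
abbrev NLf (d : ℕ) := (ET d → ℝ) → ℝ

/-- a genuine non-linearity: smooth and depending on finitely many coordinates -/
def IsNonlin (F : NLf d) : Prop :=
  ∃ (S : Finset (ET d)) (f : ({o : ET d // o ∈ S} → ℝ) → ℝ), ContDiff ℝ (⊤ : ℕ∞) f ∧
    ∀ x : ET d → ℝ, F x = f fun o => x o.1

/-- the partial derivative `D_o` in the coordinate `o ∈ ℰ` -/
def Dedge (o : ET d) (F : NLf d) : NLf d :=
  fun x => deriv (fun t : ℝ => F (Function.update x o (x o + t))) 0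

/-- iterated partial derivatives `D_{o_1} ⋯ D_{o_n}` -/
def DList (os : List (ET d)) (F : NLf d) : NLf d := os.foldr Dedge F

/-- the `i`-th coordinate multi-index `e_i` -/
def eI (i : Fin d) : Nd d := Pi.single i 1

/-- the derivation `∂^{e_i} F = Σ_p 𝒴_{(𝓘,p+e_i)} D_{(𝓘,p)} F` -/
def paD (i : Fin d) (F : NLf d) : NLf d :=
  fun x => ∑ᶠ p : Nd d, x (Typ.In, p + eI i) * Dedge (Typ.In, p) F x

/-- the iterated derivation `∂^k` -/
def paPow (k : Nd d) (F : NLf d) : NLf d :=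
  (List.finRange d).foldr (fun i g => (paD i)^[k i] ∘ g) id F

mutual
  /-- the coherence map `Υ^𝐅` of an extended non-linearity `𝐅 = (F_a)_{a ≤ 0}`:
  `Υ^𝐅[𝟏^a X^k Ξ_L ∏_j 𝓘_{m_j}[τ_j]]
    = (∏_j Υ^𝐅[τ_j]) ⬝ (∂^k ∏_j D_{(𝓘,m_j)} ∏_{l∈L} D_{(Ξ,l)}) F_a` -/
  def Ups (Fam : ℝ → NLf d) : Tr d → NLf d
    | .node a k L B => fun x =>
        UpsB Fam B x *
          paPow k
            (DList ((B.map fun y => ((Typ.In, y.1) : ET d)) ++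
              L.map fun l => ((Typ.Xi, l) : ET d)) (Fam a)) x
  def UpsB (Fam : ℝ → NLf d) : List (Nd d × Tr d) → NLf d
    | [] => fun _ => 1
    | y :: ys => fun x => Ups Fam y.2 x * UpsB Fam ys x
end

/-- a jet `U = Σ_k u_k X^k/k! + Σ_τ u_τ τ/τ!`: a polynomial part and coefficients on
non-polynomial trees -/
structure Jet (d : ℕ) where
  p : Nd d → ℝ
  r : Tr d → ℝ
  poly : ∀ k : Nd d, r (Tr.Xpow k) = 0

/-- the point of `ℝ^ℰ` determined by the polynomial part of a jet -/
def Jet.toE (U : Jet d) : ET d → ℝ :=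
  fun o => match o.1 with
  | Typ.In => U.p o.2
  | Typ.Xi => 0

/-- `𝓘_0[τ]` -/
def plant0 (τ : Tr d) : Tr d := Tr.plant 0 τ

/-- the coefficient, on the basis tree `σ = 𝟏^a X^k Ξ_L ∏_j 𝓘_{m_j}[τ_j]` (relative to
`σ/σ!`), of the jet `𝐅(U) = Σ_{a ≤ 0} 𝓕_a(U) 𝟏^a`, where
`𝓕_a(U) = Σ_{α ∈ ℕ^ℰ} (D^α F_a(U^P, 0)/α!) (U - u, Ξ)^α` is the Taylor lift of `F_a`.
The sum runs over the ways the factors `(𝒟^qU - u_q 𝟏)` can contribute a polynomial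
`u_m X^{m-q}/(m-q)!` (recorded as a list `P` of pairs `(q, m)`) or a planted tree
`u_{𝓘[τ_j]} 𝓘_{m_j}[τ_j]/τ_j!`. -/
def liftNL (Fam : ℝ → NLf d) (U : Jet d) : Tr d → ℝ :=
  fun σ => match σ with
  | .node a k L B =>
      (ndFact k : ℝ) *
        ∑ᶠ P ∈ {P : List (Nd d × Nd d) |
            (∀ x ∈ P, x.1 ≤ x.2 ∧ x.1 ≠ x.2) ∧ (P.map fun x => x.2 - x.1).sum = k},
          (1 / (P.length.factorial : ℝ)) *
            DList ((P.map fun x => ((Typ.In, x.1) : ET d)) ++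
                (B.map fun y => ((Typ.In, y.1) : ET d)) ++
                L.map fun l => ((Typ.Xi, l) : ET d)) (Fam a) U.toE *
            (P.map fun x => U.p x.2 / (ndFact (x.2 - x.1) : ℝ)).prod *
            (B.map fun y => U.r (plant0 y.2)).prod

/-- the jet `U` solves the algebraic fixed point equation `U = U^P + 𝓘_0[𝐅(U)]` -/
def SolvesFP (Fam : ℝ → NLf d) (U : Jet d) : Prop :=
  (∀ σ : Tr d, U.r σ ≠ 0 → ∃ τ, σ = plant0 τ) ∧
  ∀ τ : Tr d, U.r (plant0 τ) = liftNL Fam U τ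

/-- the jet `U` is coherent with the extended non-linearity `𝐅`:
`U` is of the planted form and `u_{𝓘[τ]} = Υ^𝐅[τ](U^P, 0)` -/
def Coherent (Fam : ℝ → NLf d) (U : Jet d) : Prop :=
  (∀ σ : Tr d, U.r σ ≠ 0 → ∃ τ, σ = plant0 τ) ∧
  ∀ τ : Tr d, U.r (plant0 τ) = Ups Fam τ U.toE

/-- an extended non-linearity `(F_a)_{a ≤ 0}`: indexed by non-positive reals, finitely
many nonzero, each a genuine non-linearity -/
def IsExtNonlin (Fam : ℝ → NLf d) : Prop :=
  (∀ a : ℝ, 0 < a → Fam a = 0) ∧ {a : ℝ | Fam a ≠ 0}.Finite ∧ ∀ a, IsNonlin (Fam a)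

/-- a non-linearity depending only on the coordinates in `S` -/
def NLOn {d : ℕ} (S : Finset (ET d)) (F : NLf d) : Prop :=
  ∃ f : ({o : ET d // o ∈ S} → ℝ) → ℝ, ContDiff ℝ (⊤ : ℕ∞) f ∧
    ∀ x : ET d → ℝ, F x = f fun o => x o.1

theorem NLOn.mono {d : ℕ} {S S' : Finset (ET d)} {F : NLf d} (hF : NLOn S F) (h : S ⊆ S') :
    NLOn S' F := by
  obtain ⟨f, hf, hx⟩ := hF
  refine ⟨fun y => f fun o => y ⟨o.1, h o.2⟩, hf.comp ?_, hx⟩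
  fun_prop

theorem Dedge_hasDerivAt {d : ℕ} {S : Finset (ET d)} {F : NLf d}
    {f : ({o : ET d // o ∈ S} → ℝ) → ℝ} (hf : ContDiff ℝ (⊤ : ℕ∞) f)
    (hx : ∀ x : ET d → ℝ, F x = f fun o => x o.1) (o : ET d) (x : ET d → ℝ) :
    HasDerivAt (fun t : ℝ => F (Function.update x o (x o + t)))
      (fderiv ℝ f (fun p => x p.1) (fun p => if p.1 = o then 1 else 0)) 0 := by
  have h1 : HasDerivAt (fun t : ℝ => (fun p : {o : ET d // o ∈ S} => x p.1) +
      t • (fun p : {o : ET d // o ∈ S} => if p.1 = o then (1 : ℝ) else 0))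
      (fun p => if p.1 = o then 1 else 0) 0 := by
    simpa using ((hasDerivAt_id (0 : ℝ)).smul_const
      (fun p : {o : ET d // o ∈ S} => if p.1 = o then (1 : ℝ) else 0)).const_add
        (fun p : {o : ET d // o ∈ S} => x p.1)
  have h2 : HasFDerivAt f (fderiv ℝ f (fun p => x p.1))
      ((fun p : {o : ET d // o ∈ S} => x p.1) +
      (0 : ℝ) • (fun p : {o : ET d // o ∈ S} => if p.1 = o then (1 : ℝ) else 0)) := by
    rw [zero_smul, add_zero]
    exact (hf.differentiable (by simp) _).hasFDerivAt
  have h3 := h2.comp_hasDerivAt (0 : ℝ) h1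
  refine h3.congr_of_eventuallyEq (Filter.Eventually.of_forall fun t => ?_)
  simp only [hx, Function.comp]
  congr 1
  funext p
  by_cases hp : p.1 = o
  · simp [hp]
  · simp [hp]

theorem Dedge_eq_fderiv {d : ℕ} {S : Finset (ET d)} {F : NLf d}
    {f : ({o : ET d // o ∈ S} → ℝ) → ℝ} (hf : ContDiff ℝ (⊤ : ℕ∞) f)
    (hx : ∀ x : ET d → ℝ, F x = f fun o => x o.1) (o : ET d) (x : ET d → ℝ) :
    Dedge o F x = fderiv ℝ f (fun p => x p.1) (fun p => if p.1 = o then 1 else 0) :=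
  (Dedge_hasDerivAt hf hx o x).deriv

theorem NLOn.dedge {d : ℕ} {S : Finset (ET d)} {F : NLf d} (hF : NLOn S F) (o : ET d) :
    NLOn S (Dedge o F) := by
  obtain ⟨f, hf, hx⟩ := hF
  refine ⟨fun y => fderiv ℝ f y (fun p => if p.1 = o then 1 else 0), ?_,
    fun x => Dedge_eq_fderiv hf hx o x⟩
  exact (hf.fderiv_right (m := ((⊤ : ℕ∞) : WithTop ℕ∞)) (by simp)).clm_apply contDiff_const

theorem NLOn.dedge_eq_zero {d : ℕ} {S : Finset (ET d)} {F : NLf d} (hF : NLOn S F) {o : ET d}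
    (ho : o ∉ S) : Dedge o F = 0 := by
  obtain ⟨f, hf, hx⟩ := hF
  funext x
  rw [Dedge_eq_fderiv hf hx]
  have : (fun p : {o : ET d // o ∈ S} => if p.1 = o then (1 : ℝ) else 0) = 0 := by
    funext p
    have : p.1 ≠ o := fun h => ho (h ▸ p.2)
    simp [this]
  rw [this]; simp

theorem NLOn.dedge_comm {d : ℕ} {S : Finset (ET d)} {F : NLf d} (hF : NLOn S F) (o o' : ET d) :
    Dedge o (Dedge o' F) = Dedge o' (Dedge o F) := by
  obtain ⟨f, hf, hx⟩ := hF
  have hd : ∀ o, ContDiff ℝ (⊤ : ℕ∞)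
      (fun y => fderiv ℝ f y (fun p : {o : ET d // o ∈ S} => if p.1 = o then (1 : ℝ) else 0)) :=
    fun o => (hf.fderiv_right (m := ((⊤ : ℕ∞) : WithTop ℕ∞)) (by simp)).clm_apply contDiff_const
  have hdf : Differentiable ℝ (fderiv ℝ f) :=
    (hf.fderiv_right (m := ((⊤ : ℕ∞) : WithTop ℕ∞)) (by simp)).differentiable (by simp)
  funext x
  rw [Dedge_eq_fderiv (hd o') (fun x => Dedge_eq_fderiv hf hx o' x),
    Dedge_eq_fderiv (hd o) (fun x => Dedge_eq_fderiv hf hx o x)]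
  have hs : IsSymmSndFDerivAt ℝ f (fun p => x p.1) :=
    hf.contDiffAt.isSymmSndFDerivAt (by
      rw [minSmoothness_of_isRCLikeNormedField]
      exact WithTop.coe_le_coe.2 (le_top : (2 : ℕ∞) ≤ ⊤))
  rw [fderiv_clm_apply (hdf _) (differentiableAt_const _),
    fderiv_clm_apply (hdf _) (differentiableAt_const _)]
  simpa using hs.eq _ _

theorem NLOn.isNonlin {d : ℕ} {S : Finset (ET d)} {F : NLf d} (hF : NLOn S F) : IsNonlin F :=
  ⟨S, hF⟩

theorem IsNonlin.dedge {d : ℕ} {F : NLf d} (hF : IsNonlin F) (o : ET d) :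
    IsNonlin (Dedge o F) := by
  obtain ⟨S, hS⟩ := hF
  exact ⟨S, NLOn.dedge hS o⟩

theorem isNonlin_const {d : ℕ} (c : ℝ) : IsNonlin (fun _ : ET d → ℝ => c) :=
  ⟨∅, fun _ => c, contDiff_const, fun _ => rfl⟩

theorem isNonlin_zero {d : ℕ} : IsNonlin (0 : NLf d) := isNonlin_const 0

/-- the coordinate `𝒴_{(𝓘,m)}` -/
def coordI {d : ℕ} (m : Nd d) : NLf d := fun x => x (Typ.In, m)

theorem isNonlin_coordI {d : ℕ} (m : Nd d) : IsNonlin (coordI m) :=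
  ⟨{(Typ.In, m)}, fun y => y ⟨(Typ.In, m), by simp⟩, by fun_prop, fun _ => rfl⟩

theorem IsNonlin.exists_common {d : ℕ} {F G : NLf d} (hF : IsNonlin F) (hG : IsNonlin G) :
    ∃ S, NLOn S F ∧ NLOn S G := by
  obtain ⟨S, hS⟩ := hF
  obtain ⟨T, hT⟩ := hG
  exact ⟨S ∪ T, NLOn.mono hS Finset.subset_union_left, NLOn.mono hT Finset.subset_union_right⟩

theorem NLOn.add {d : ℕ} {S : Finset (ET d)} {F G : NLf d} (hF : NLOn S F) (hG : NLOn S G) :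
    NLOn S (F + G) := by
  obtain ⟨f, hf, hx⟩ := hF
  obtain ⟨g, hg, hy⟩ := hG
  exact ⟨fun y => f y + g y, hf.add hg, fun x => by simp [hx, hy]⟩

theorem NLOn.mul {d : ℕ} {S : Finset (ET d)} {F G : NLf d} (hF : NLOn S F) (hG : NLOn S G) :
    NLOn S (F * G) := by
  obtain ⟨f, hf, hx⟩ := hF
  obtain ⟨g, hg, hy⟩ := hG
  exact ⟨fun y => f y * g y, hf.mul hg, fun x => by simp [hx, hy]⟩

theorem IsNonlin.add {d : ℕ} {F G : NLf d} (hF : IsNonlin F) (hG : IsNonlin G) :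
    IsNonlin (F + G) :=
  let ⟨_, h, h'⟩ := hF.exists_common hG
  (h.add h').isNonlin

theorem IsNonlin.mul {d : ℕ} {F G : NLf d} (hF : IsNonlin F) (hG : IsNonlin G) :
    IsNonlin (F * G) :=
  let ⟨_, h, h'⟩ := hF.exists_common hG
  (h.mul h').isNonlin

theorem IsNonlin.smul {d : ℕ} {F : NLf d} (hF : IsNonlin F) (c : ℝ) : IsNonlin (c • F) :=
  (isNonlin_const c).mul hF

theorem isNonlin_sum {d : ℕ} {ι : Type*} (s : Finset ι) (F : ι → NLf d)
    (hF : ∀ j ∈ s, IsNonlin (F j)) : IsNonlin (∑ j ∈ s, F j) :=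
  Finset.sum_induction F IsNonlin (fun _ _ h h' => h.add h') isNonlin_zero hF

theorem IsNonlin.differentiableAt {d : ℕ} {F : NLf d} (hF : IsNonlin F) (o : ET d)
    (x : ET d → ℝ) :
    DifferentiableAt ℝ (fun t : ℝ => F (Function.update x o (x o + t))) 0 := by
  obtain ⟨S, f, hf, hx⟩ := hF
  exact (Dedge_hasDerivAt hf hx o x).differentiableAt

theorem Dedge_add {d : ℕ} {F G : NLf d} (hF : IsNonlin F) (hG : IsNonlin G) (o : ET d) :
    Dedge o (F + G) = Dedge o F + Dedge o G := by
  funext x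
  exact deriv_add (hF.differentiableAt o x) (hG.differentiableAt o x)

theorem Dedge_mul {d : ℕ} {F G : NLf d} (hF : IsNonlin F) (hG : IsNonlin G) (o : ET d) :
    Dedge o (F * G) = Dedge o F * G + F * Dedge o G := by
  funext x
  refine (deriv_mul (hF.differentiableAt o x) (hG.differentiableAt o x)).trans ?_
  simp [Dedge]

theorem Dedge_const {d : ℕ} (c : ℝ) (o : ET d) : Dedge o (fun _ => c) = 0 := by
  funext x
  simp [Dedge]

theorem Dedge_zero {d : ℕ} (o : ET d) : Dedge o (0 : NLf d) = 0 := Dedge_const 0 o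

theorem Dedge_coord {d : ℕ} (o o' : ET d) :
    Dedge o (fun x => x o') = fun _ => if o = o' then 1 else 0 := by
  funext x
  by_cases h : o = o'
  · subst h
    simp [Dedge]
  · simp [Dedge, Function.update_of_ne (Ne.symm h), h]

/-- the multi-indices `p` with `(𝓘, p) ∈ S` -/
def inIdx {d : ℕ} (S : Finset (ET d)) : Finset (Nd d) :=
  (S.filter fun o => o.1 = Typ.In).image Prod.snd

theorem mem_inIdx {d : ℕ} {S : Finset (ET d)} {p : Nd d} : p ∈ inIdx S ↔ (Typ.In, p) ∈ S := by
  simp only [inIdx, Finset.mem_image, Finset.mem_filter]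
  constructor
  · rintro ⟨⟨t, q⟩, ⟨h, rfl⟩, rfl⟩
    exact h
  · exact fun h => ⟨_, ⟨h, rfl⟩, rfl⟩

theorem paD_eq_sum {d : ℕ} {S : Finset (ET d)} {F : NLf d} (hF : NLOn S F) (i : Fin d) :
    paD i F = ∑ p ∈ inIdx S, coordI (p + eI i) * Dedge (Typ.In, p) F := by
  funext x
  rw [Finset.sum_apply]
  refine finsum_eq_sum_of_support_subset _ fun p hp => ?_
  by_contra h
  apply hp
  have h' : (Typ.In, p) ∉ S := fun h'' => h (mem_inIdx.2 h'')
  simp [hF.dedge_eq_zero h']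

theorem paD_add {d : ℕ} {F G : NLf d} (hF : IsNonlin F) (hG : IsNonlin G) (i : Fin d) :
    paD i (F + G) = paD i F + paD i G := by
  obtain ⟨S, h, h'⟩ := hF.exists_common hG
  rw [paD_eq_sum h, paD_eq_sum h', paD_eq_sum (h.add h'), ← Finset.sum_add_distrib]
  simp only [Dedge_add hF hG, mul_add]

theorem paD_mul {d : ℕ} {F G : NLf d} (hF : IsNonlin F) (hG : IsNonlin G) (i : Fin d) :
    paD i (F * G) = paD i F * G + F * paD i G := by
  obtain ⟨S, h, h'⟩ := hF.exists_common hG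
  rw [paD_eq_sum h, paD_eq_sum h', paD_eq_sum (h.mul h'), Finset.sum_mul, Finset.mul_sum,
    ← Finset.sum_add_distrib]
  refine Finset.sum_congr rfl fun p _ => ?_
  rw [Dedge_mul hF hG]
  ring

theorem paD_const {d : ℕ} (c : ℝ) (i : Fin d) : paD i (fun _ => c) = 0 := by
  funext x
  simp [paD, Dedge_const]

theorem paD_zero {d : ℕ} (i : Fin d) : paD i (0 : NLf d) = 0 := paD_const 0 i

theorem paD_smul {d : ℕ} {F : NLf d} (hF : IsNonlin F) (c : ℝ) (i : Fin d) :
    paD i (c • F) = c • paD i F := by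
  have h : ∀ G : NLf d, c • G = (fun _ => c) * G := fun G => rfl
  rw [h, h, paD_mul (isNonlin_const c) hF, paD_const]
  simp

theorem paD_sum {d : ℕ} {ι : Type*} (s : Finset ι) (F : ι → NLf d)
    (hF : ∀ j ∈ s, IsNonlin (F j)) (i : Fin d) :
    paD i (∑ j ∈ s, F j) = ∑ j ∈ s, paD i (F j) := by
  induction s using Finset.induction_on with
  | empty => simp [paD_zero]
  | insert a s ha ih =>
    rw [Finset.sum_insert ha, Finset.sum_insert ha,
      paD_add (hF _ (Finset.mem_insert_self _ _))
        (isNonlin_sum _ _ fun j hj => hF j (Finset.mem_insert_of_mem hj)),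
      ih fun j hj => hF j (Finset.mem_insert_of_mem hj)]

theorem paD_coordI {d : ℕ} (m : Nd d) (i : Fin d) : paD i (coordI m) = coordI (m + eI i) := by
  funext x
  have : ∀ p : Nd d, Dedge (Typ.In, p) (coordI m) x = if p = m then 1 else 0 := by
    intro p
    change Dedge (Typ.In, p) (fun x => x (Typ.In, m)) x = _
    simp [Dedge_coord]
  simp only [paD, this]
  rw [finsum_eq_single _ m (by intro p hp; simp [hp])]
  simp [coordI]

/-- the pairs of multi-indices with a given sum -/
def antidiag {d : ℕ} (k : Nd d) : Finset (Nd d × Nd d) :=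
  (Finset.Iic k ×ˢ Finset.Iic k).filter fun z => z.1 + z.2 = k

theorem mem_antidiag {d : ℕ} {k : Nd d} {z : Nd d × Nd d} : z ∈ antidiag k ↔ z.1 + z.2 = k := by
  simp only [antidiag, Finset.mem_filter, Finset.mem_product, Finset.mem_Iic, and_iff_right_iff_imp]
  rintro rfl
  exact ⟨fun i => by simp, fun i => by simp⟩

theorem sum_antidiag_snd {d : ℕ} (k : Nd d) (i : Fin d) (φ : Nd d × Nd d → NLf d) :
    ∑ z ∈ antidiag (k + eI i), (z.2 i : ℝ) • φ z =
      ∑ z ∈ antidiag k, ((z.2 i : ℝ) + 1) • φ (z.1, z.2 + eI i) := by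
  symm
  refine Finset.sum_of_injOn (fun z => (z.1, z.2 + eI i)) ?_ ?_ ?_ ?_
  · rintro ⟨a, b⟩ _ ⟨a', b'⟩ _ h
    simpa using h
  · rintro ⟨a, b⟩ h
    simp only [Finset.mem_coe, mem_antidiag] at h ⊢
    rw [← h, add_assoc]
  · rintro ⟨a, b⟩ h hn
    rw [mem_antidiag] at h
    have hb : b i = 0 := by
      by_contra hb
      apply hn
      have hbe : b - eI i + eI i = b := by
        funext j
        by_cases hj : j = i
        · subst hj
          simp [eI]
          omega
        · simp [eI, hj]
      refine ⟨(a, b - eI i), ?_, by simp [hbe]⟩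
      simp only [Finset.mem_coe, mem_antidiag]
      apply add_right_cancel (b := eI i)
      rw [add_assoc, hbe]
      exact h
    simp [hb]
  · rintro ⟨a, b⟩ _
    simp [eI]

theorem sum_antidiag_swap {d : ℕ} (k : Nd d) (φ : Nd d × Nd d → NLf d) :
    ∑ z ∈ antidiag k, φ z = ∑ z ∈ antidiag k, φ z.swap := by
  refine Finset.sum_nbij' Prod.swap Prod.swap ?_ ?_ ?_ ?_ ?_ <;>
    simp +contextual [mem_antidiag, add_comm]

theorem sum_antidiag_fst {d : ℕ} (k : Nd d) (i : Fin d) (φ : Nd d × Nd d → NLf d) :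
    ∑ z ∈ antidiag (k + eI i), (z.1 i : ℝ) • φ z =
      ∑ z ∈ antidiag k, ((z.1 i : ℝ) + 1) • φ (z.1 + eI i, z.2) := by
  rw [sum_antidiag_swap, sum_antidiag_swap k]
  exact sum_antidiag_snd k i fun z => φ z.swap

theorem ndFact_add_eI {d : ℕ} (k : Nd d) (i : Fin d) :
    ndFact (k + eI i) = (k i + 1) * ndFact k := by
  unfold ndFact
  rw [← Finset.mul_prod_erase Finset.univ _ (Finset.mem_univ i),
    ← Finset.mul_prod_erase Finset.univ (fun j => (k j).factorial) (Finset.mem_univ i), ← mul_assoc]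
  congr 1
  · simp [eI, Nat.factorial_succ]
  · refine Finset.prod_congr rfl fun j hj => ?_
    simp [eI, Finset.ne_of_mem_erase hj]

/-- the coefficient of `X^h` in `𝒟^q U - u_q 𝟏`, as a function of the polynomial part of `U` -/
def polyCoeff {d : ℕ} (q h : Nd d) : NLf d :=
  if h = 0 then 0 else (ndFact h : ℝ)⁻¹ • coordI (q + h)

theorem isNonlin_polyCoeff {d : ℕ} (q h : Nd d) : IsNonlin (polyCoeff q h) := by
  unfold polyCoeff
  split_ifs
  · exact isNonlin_zero
  · exact (isNonlin_coordI _).smul _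

theorem polyCoeff_add_eI {d : ℕ} (q h : Nd d) (i : Fin d) :
    ((h i : ℝ) + 1) • polyCoeff q (h + eI i) =
      paD i (polyCoeff q h) + if h = 0 then coordI (q + eI i) else 0 := by
  have hne : h + eI i ≠ 0 := by
    intro h0
    have := congrFun h0 i
    simp [eI] at this
  have hc : ((h i : ℝ) + 1) ≠ 0 := by positivity
  have h1 : ((h i : ℝ) + 1) • polyCoeff q (h + eI i) =
      (ndFact h : ℝ)⁻¹ • coordI (q + h + eI i) := by
    rw [polyCoeff, if_neg hne, ndFact_add_eI, smul_smul, ← add_assoc]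
    congr 1
    push_cast
    field_simp
  rw [h1]
  by_cases h0 : h = 0
  · subst h0
    simp [polyCoeff, paD_zero, ndFact]
  · simp only [polyCoeff, if_neg h0, add_zero]
    rw [paD_smul (isNonlin_coordI _), paD_coordI]

/-- the contribution to the coefficient of `X^k` in the Taylor lift of `G` of the terms with
exactly `n` polynomial factors, without the factor `1 / n!` -/
def taylorTerm {d : ℕ} (Q : Finset (Nd d)) : ℕ → Nd d → NLf d → NLf d
  | 0, k, G => if k = 0 then G else 0
  | n + 1, k, G => ∑ q ∈ Q, ∑ z ∈ antidiag k,
      polyCoeff q z.1 * taylorTerm Q n z.2 (Dedge (Typ.In, q) G)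

/-- `Σ_p 𝒴_{(𝓘,p+e_i)} D_{(𝓘,p)}` acting on `G` inside `taylorTerm` -/
def taylorShift {d : ℕ} (Q : Finset (Nd d)) (i : Fin d) (n : ℕ) (k : Nd d) (G : NLf d) : NLf d :=
  ∑ p ∈ Q, coordI (p + eI i) * taylorTerm Q n k (Dedge (Typ.In, p) G)

theorem isNonlin_taylorTerm {d : ℕ} (Q : Finset (Nd d)) (n : ℕ) (k : Nd d) {G : NLf d}
    (hG : IsNonlin G) : IsNonlin (taylorTerm Q n k G) := by
  induction n generalizing k G with
  | zero =>
    unfold taylorTerm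
    split_ifs
    · exact hG
    · exact isNonlin_zero
  | succ n ih =>
    unfold taylorTerm
    exact isNonlin_sum _ _ fun q _ => isNonlin_sum _ _ fun z _ =>
      (isNonlin_polyCoeff q z.1).mul (ih _ (hG.dedge _))

theorem taylorTerm_eq_zero {d : ℕ} (Q : Finset (Nd d)) (n : ℕ) (k : Nd d) (G : NLf d)
    (hn : ∑ i, k i < n) : taylorTerm Q n k G = 0 := by
  induction n generalizing k G with
  | zero => omega
  | succ n ih =>
    unfold taylorTerm
    refine Finset.sum_eq_zero fun q _ => Finset.sum_eq_zero fun z hz => ?_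
    rw [mem_antidiag] at hz
    by_cases h0 : z.1 = 0
    · simp [polyCoeff, h0]
    · have hpos : 0 < ∑ i, z.1 i := by
        rw [Nat.pos_iff_ne_zero]
        intro h
        apply h0
        funext i
        exact Finset.sum_eq_zero_iff.1 h i (Finset.mem_univ i)
      have hs : ∑ i, k i = ∑ i, z.1 i + ∑ i, z.2 i := by
        rw [← hz, ← Finset.sum_add_distrib]
        rfl
      rw [ih _ _ (by omega), mul_zero]

theorem sum_taylorShift {d : ℕ} {S : Finset (ET d)} {G : NLf d} (hG : NLOn S G)
    (Q : Finset (Nd d)) (i : Fin d) (n : ℕ) (k : Nd d) :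
    ∑ q ∈ Q, ∑ z ∈ antidiag k,
      polyCoeff q z.1 * taylorShift Q i n z.2 (Dedge (Typ.In, q) G) =
      taylorShift Q i (n + 1) k G := by
  simp only [taylorShift, taylorTerm, Finset.mul_sum]
  rw [Finset.sum_congr rfl fun q _ => Finset.sum_comm, Finset.sum_comm]
  refine Finset.sum_congr rfl fun p _ => Finset.sum_congr rfl fun q _ =>
    Finset.sum_congr rfl fun z _ => ?_
  rw [hG.dedge_comm]
  ring

theorem taylorTerm_add_eI {d : ℕ} {S : Finset (ET d)} {G : NLf d} (hG : NLOn S G) (i : Fin d)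
    (n : ℕ) (k : Nd d) :
    ((k i : ℝ) + 1) • taylorTerm (inIdx S) n (k + eI i) G + taylorShift (inIdx S) i n k G =
      paD i (taylorTerm (inIdx S) n k G) + (n : ℝ) • taylorShift (inIdx S) i (n - 1) k G := by
  induction n generalizing k G with
  | zero =>
    have hne : k + eI i ≠ 0 := by
      intro h0
      have := congrFun h0 i
      simp [eI] at this
    by_cases hk : k = 0
    · subst hk
      rw [taylorTerm, if_neg hne]
      simp [taylorTerm, taylorShift, paD_eq_sum hG]
    · simp [taylorTerm, taylorShift, hne, hk, paD_zero]
  | succ n ih =>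
    set Q := inIdx S
    have hGn := hG.isNonlin
    have hsplit : ((k i : ℝ) + 1) • taylorTerm Q (n + 1) (k + eI i) G =
        ∑ q ∈ Q, (∑ z ∈ antidiag (k + eI i), (z.1 i : ℝ) •
            (polyCoeff q z.1 * taylorTerm Q n z.2 (Dedge (Typ.In, q) G)) +
          ∑ z ∈ antidiag (k + eI i), (z.2 i : ℝ) •
            (polyCoeff q z.1 * taylorTerm Q n z.2 (Dedge (Typ.In, q) G))) := by
      rw [taylorTerm, Finset.smul_sum]
      refine Finset.sum_congr rfl fun q _ => ?_
      rw [Finset.smul_sum, ← Finset.sum_add_distrib]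
      refine Finset.sum_congr rfl fun z hz => ?_
      rw [mem_antidiag] at hz
      rw [← add_smul]
      congr 1
      have := congrFun hz i
      simp [eI] at this
      exact_mod_cast this.symm
    have hterm : ∀ q ∈ Q, ∀ z ∈ antidiag k,
        ((z.1 i : ℝ) + 1) • (polyCoeff q (z.1 + eI i) *
            taylorTerm Q n z.2 (Dedge (Typ.In, q) G)) +
          ((z.2 i : ℝ) + 1) • (polyCoeff q z.1 *
            taylorTerm Q n (z.2 + eI i) (Dedge (Typ.In, q) G)) +
          polyCoeff q z.1 * taylorShift Q i n z.2 (Dedge (Typ.In, q) G) =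
        paD i (polyCoeff q z.1 * taylorTerm Q n z.2 (Dedge (Typ.In, q) G)) +
          ((n : ℝ) • (polyCoeff q z.1 * taylorShift Q i (n - 1) z.2 (Dedge (Typ.In, q) G)) +
          (if z.1 = 0 then coordI (q + eI i) else 0) *
            taylorTerm Q n z.2 (Dedge (Typ.In, q) G)) := by
      intro q _ z _
      rw [paD_mul (isNonlin_polyCoeff _ _) (isNonlin_taylorTerm _ _ _ (hGn.dedge _)),
        ← smul_mul_assoc, polyCoeff_add_eI, ← mul_smul_comm, ← mul_smul_comm, add_assoc,
        ← mul_add, ih (hG.dedge _)]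
      ring
    have hzero : ∑ q ∈ Q, ∑ z ∈ antidiag k, (if z.1 = 0 then coordI (q + eI i) else 0) *
        taylorTerm Q n z.2 (Dedge (Typ.In, q) G) = taylorShift Q i n k G := by
      refine Finset.sum_congr rfl fun q _ => ?_
      rw [Finset.sum_eq_single (0, k)]
      · simp
      · rintro ⟨a, b⟩ hab hne
        rw [mem_antidiag] at hab
        have : a ≠ 0 := by
          rintro rfl
          exact hne (by simpa using hab)
        simp [this]
      · intro h
        exact absurd (mem_antidiag.2 (by simp)) h
    have hn : ∑ q ∈ Q, ∑ z ∈ antidiag k,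
        (n : ℝ) • (polyCoeff q z.1 * taylorShift Q i (n - 1) z.2 (Dedge (Typ.In, q) G)) =
        (n : ℝ) • taylorShift Q i n k G := by
      simp only [← Finset.smul_sum]
      cases n with
      | zero => simp
      | succ m => rw [Nat.add_sub_cancel, sum_taylorShift hG]
    have hpaD : paD i (taylorTerm Q (n + 1) k G) = ∑ q ∈ Q, ∑ z ∈ antidiag k,
        paD i (polyCoeff q z.1 * taylorTerm Q n z.2 (Dedge (Typ.In, q) G)) := by
      have hnl : ∀ q (z : Nd d × Nd d),
          IsNonlin (polyCoeff q z.1 * taylorTerm Q n z.2 (Dedge (Typ.In, q) G)) := fun q z =>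
        (isNonlin_polyCoeff q z.1).mul (isNonlin_taylorTerm _ _ _ (hGn.dedge _))
      rw [taylorTerm, paD_sum _ _ fun q _ => isNonlin_sum _ _ fun z _ => hnl q z]
      exact Finset.sum_congr rfl fun q _ => paD_sum _ _ (fun z _ => hnl q z) i
    rw [hsplit, hpaD, ← sum_taylorShift hG, Nat.add_sub_cancel, Nat.cast_succ, add_smul, one_smul,
      ← hn, ← hzero]
    simp only [sum_antidiag_fst, sum_antidiag_snd, ← Finset.sum_add_distrib]
    exact Finset.sum_congr rfl fun q hq => Finset.sum_congr rfl fun z hz => hterm q hq z hz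

/-- the coefficient of `X^k / k!` in the Taylor lift of `G` -/
def taylorCoeff {d : ℕ} (Q : Finset (Nd d)) (k : Nd d) (G : NLf d) : NLf d :=
  (ndFact k : ℝ) • ∑ n ∈ Finset.range (∑ i, k i + 1), (n.factorial : ℝ)⁻¹ • taylorTerm Q n k G

theorem paD_taylorCoeff {d : ℕ} {S : Finset (ET d)} {G : NLf d} (hG : NLOn S G) (i : Fin d)
    (k : Nd d) :
    paD i (taylorCoeff (inIdx S) k G) = taylorCoeff (inIdx S) (k + eI i) G := by
  have hnl := fun n => isNonlin_taylorTerm (inIdx S) n k hG.isNonlin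
  have hsum : ∑ j, (k + eI i) j = ∑ j, k j + 1 := by
    simp [Finset.sum_add_distrib, eI]
  have htel : ∀ N : ℕ, ∑ n ∈ Finset.range (N + 1),
        (n.factorial : ℝ)⁻¹ • (((k i : ℝ) + 1) • taylorTerm (inIdx S) n (k + eI i) G) +
          (N.factorial : ℝ)⁻¹ • taylorShift (inIdx S) i N k G =
      ∑ n ∈ Finset.range (N + 1), (n.factorial : ℝ)⁻¹ • paD i (taylorTerm (inIdx S) n k G) := by
    intro N
    induction N with
    | zero => simpa using taylorTerm_add_eI hG i 0 k
    | succ N ih =>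
      have h := taylorTerm_add_eI hG i (N + 1) k
      rw [Finset.sum_range_succ, add_assoc, ← smul_add, h, Finset.sum_range_succ _ (N + 1), ← ih,
        Nat.add_sub_cancel, smul_add, smul_smul]
      have : ((N + 1).factorial : ℝ)⁻¹ * ((N + 1 : ℕ) : ℝ) = (N.factorial : ℝ)⁻¹ := by
        have := N.factorial_ne_zero
        rw [Nat.factorial_succ]
        push_cast
        field_simp
      rw [this]
      abel
  have hshift : taylorShift (inIdx S) i (∑ j, k j + 1) k G = 0 :=
    Finset.sum_eq_zero fun p _ => by
      rw [taylorTerm_eq_zero _ _ _ _ (Nat.lt_succ_self _), mul_zero]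
  have h := htel (∑ j, k j + 1)
  rw [hshift, smul_zero, add_zero,
    Finset.sum_range_succ (fun n => (n.factorial : ℝ)⁻¹ • paD i (taylorTerm (inIdx S) n k G)),
    taylorTerm_eq_zero _ _ k _ (Nat.lt_succ_self _), paD_zero, smul_zero, add_zero] at h
  unfold taylorCoeff
  rw [paD_smul (isNonlin_sum _ _ fun n _ => (hnl n).smul _),
    paD_sum _ _ fun n _ => (hnl n).smul _, hsum, ndFact_add_eI]
  simp only [paD_smul (hnl _)]
  rw [← h, Finset.smul_sum, Finset.smul_sum]
  refine Finset.sum_congr rfl fun n _ => ?_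
  simp only [smul_smul]
  congr 1
  push_cast
  ring

theorem taylorCoeff_zero {d : ℕ} (Q : Finset (Nd d)) (G : NLf d) : taylorCoeff Q 0 G = G := by
  simp [taylorCoeff, taylorTerm, ndFact]

theorem paPow_eq_taylorCoeff {d : ℕ} {S : Finset (ET d)} {G : NLf d} (hG : NLOn S G) (k : Nd d) :
    paPow k G = taylorCoeff (inIdx S) k G := by
  have hiter : ∀ (i : Fin d) (n : ℕ) (m : Nd d),
      (paD i)^[n] (taylorCoeff (inIdx S) m G) = taylorCoeff (inIdx S) (n • eI i + m) G := by
    intro i n m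
    induction n with
    | zero => simp
    | succ n ih =>
      rw [Function.iterate_succ_apply', ih, paD_taylorCoeff hG]
      congr 1
      rw [succ_nsmul]
      abel
  have hfold : ∀ l : List (Fin d),
      l.foldr (fun i g => (paD i)^[k i] ∘ g) id G =
        taylorCoeff (inIdx S) (l.map fun i => k i • eI i).sum G := by
    intro l
    induction l with
    | nil => simp [taylorCoeff_zero]
    | cons i l ih => simp [ih, hiter]
  rw [paPow, hfold]
  congr 1
  rw [← List.ofFn_eq_map, List.sum_ofFn]
  funext j
  simp [eI, Finset.sum_apply, Pi.single_apply]

theorem DList_append {d : ℕ} (os os' : List (ET d)) (F : NLf d) :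
    DList (os ++ os') F = DList os (DList os' F) :=
  List.foldr_append

theorem NLOn.dList {d : ℕ} {S : Finset (ET d)} {F : NLf d} (hF : NLOn S F) (os : List (ET d)) :
    NLOn S (DList os F) := by
  induction os with
  | nil => exact hF
  | cons o os ih => exact ih.dedge o

theorem NLOn.dList_dedge {d : ℕ} {S : Finset (ET d)} {F : NLf d} (hF : NLOn S F)
    (os : List (ET d)) (o : ET d) : DList os (Dedge o F) = Dedge o (DList os F) := by
  induction os with
  | nil => rfl
  | cons o' os ih =>
    change Dedge o' (DList os (Dedge o F)) = Dedge o (Dedge o' (DList os F))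
    rw [ih, (hF.dList os).dedge_comm]

theorem NLOn.dList_eq_zero {d : ℕ} {S : Finset (ET d)} {F : NLf d} (hF : NLOn S F)
    {os : List (ET d)} {o : ET d} (ho : o ∈ os) (hS : o ∉ S) : DList os F = 0 := by
  induction os with
  | nil => simp at ho
  | cons o' os ih =>
    change Dedge o' (DList os F) = 0
    rcases List.mem_cons.1 ho with rfl | h
    · exact (hF.dList os).dedge_eq_zero hS
    · rw [ih h, Dedge_zero]

/-- the lists of `n` pairs `(q, m)` with `q ∈ Q`, `q < m` and `Σ (m - q) = k` -/
def pairLists {d : ℕ} (Q : Finset (Nd d)) : ℕ → Nd d → Finset (List (Nd d × Nd d))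
  | 0, k => if k = 0 then {[]} else ∅
  | n + 1, k => Q.biUnion fun q => ((antidiag k).filter fun z => z.1 ≠ 0).biUnion fun z =>
      (pairLists Q n z.2).image (List.cons (q, q + z.1))

theorem mem_pairLists {d : ℕ} {Q : Finset (Nd d)} {n : ℕ} {k : Nd d}
    {P : List (Nd d × Nd d)} :
    P ∈ pairLists Q n k ↔ P.length = n ∧ (∀ x ∈ P, x.1 ∈ Q) ∧
      (∀ x ∈ P, x.1 ≤ x.2 ∧ x.1 ≠ x.2) ∧ (P.map fun x => x.2 - x.1).sum = k := by
  induction n generalizing k P with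
  | zero =>
    unfold pairLists
    cases P with
    | nil => by_cases hk : k = 0 <;> simp [hk, eq_comm (a := (0 : Nd d))]
    | cons x P => by_cases hk : k = 0 <;> simp [hk]
  | succ n ih =>
    simp only [pairLists, Finset.mem_biUnion, Finset.mem_filter, mem_antidiag, Finset.mem_image, ih]
    constructor
    · rintro ⟨q, hq, ⟨h, l⟩, ⟨hs, h0⟩, P, ⟨hn, hQ, hlt, hl⟩, rfl⟩
      refine ⟨by simp [hn], ?_, ?_, ?_⟩
      · intro x hx
        rcases List.mem_cons.1 hx with rfl | hx
        · exact hq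
        · exact hQ x hx
      · intro x hx
        rcases List.mem_cons.1 hx with rfl | hx
        · exact ⟨le_self_add, by simpa using h0⟩
        · exact hlt x hx
      · rw [List.map_cons, List.sum_cons, hl]
        simpa using hs
    · rintro ⟨hn, hQ, hlt, hs⟩
      cases P with
      | nil => simp at hn
      | cons x P =>
        obtain ⟨q, m⟩ := x
        obtain ⟨hle, hne⟩ := hlt _ List.mem_cons_self
        simp only [List.map_cons, List.sum_cons] at hs
        simp only at hle hne
        have hm : q + (m - q) = m := add_tsub_cancel_of_le hle
        refine ⟨q, hQ _ List.mem_cons_self, (m - q, (P.map fun x => x.2 - x.1).sum), ⟨hs, ?_⟩, P,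
          ⟨by simpa using hn, fun x hx => hQ x (List.mem_cons_of_mem _ hx),
            fun x hx => hlt x (List.mem_cons_of_mem _ hx), rfl⟩, by simp [hm]⟩
        intro h0
        simp only at h0
        rw [h0, add_zero] at hm
        exact hne hm

theorem length_le_of_sum_eq {d : ℕ} {k : Nd d} {P : List (Nd d × Nd d)}
    (hP : ∀ x ∈ P, x.1 ≤ x.2 ∧ x.1 ≠ x.2) (hk : (P.map fun x => x.2 - x.1).sum = k) :
    P.length ≤ ∑ i, k i := by
  induction P generalizing k with
  | nil => simp
  | cons x P ih =>
    have h1 := ih (fun y hy => hP y (List.mem_cons_of_mem _ hy)) rfl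
    obtain ⟨hle, hne⟩ := hP x List.mem_cons_self
    obtain ⟨-, i, hi⟩ := Pi.lt_def.1 (lt_of_le_of_ne hle hne)
    have h2 : 0 < ∑ i, (x.2 - x.1) i :=
      Finset.sum_pos' (fun _ _ => Nat.zero_le _) ⟨i, Finset.mem_univ i, by
        simpa using hi⟩
    rw [List.map_cons, List.sum_cons] at hk
    rw [← hk]
    simp only [Pi.add_apply, Finset.sum_add_distrib, List.length_cons]
    omega

theorem sum_pairLists {d : ℕ} {S : Finset (ET d)} {G : NLf d} (hG : NLOn S G)
    (Q : Finset (Nd d)) (n : ℕ) (k : Nd d) (x : ET d → ℝ) :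
    ∑ P ∈ pairLists Q n k, DList (P.map fun z => ((Typ.In, z.1) : ET d)) G x *
        (P.map fun z => x (Typ.In, z.2) / (ndFact (z.2 - z.1) : ℝ)).prod =
      taylorTerm Q n k G x := by
  induction n generalizing k G with
  | zero =>
    by_cases hk : k = 0 <;> simp [pairLists, taylorTerm, hk, DList]
  | succ n ih =>
    rw [pairLists, Finset.sum_biUnion, taylorTerm, Finset.sum_apply]
    · refine Finset.sum_congr rfl fun q _ => ?_
      rw [Finset.sum_biUnion, Finset.sum_apply, Finset.sum_filter]
      · refine Finset.sum_congr rfl fun z _ => ?_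
        by_cases hz : z.1 = 0
        · simp [hz, polyCoeff]
        · rw [if_pos hz, Finset.sum_image (fun _ _ _ _ h => List.tail_eq_of_cons_eq h),
            Pi.mul_apply, ← ih (hG.dedge _), Finset.mul_sum]
          refine Finset.sum_congr rfl fun P _ => ?_
          rw [hG.dList_dedge]
          simp only [List.map_cons, List.prod_cons, polyCoeff, if_neg hz, Pi.smul_apply, coordI,
            smul_eq_mul, add_tsub_cancel_left]
          change Dedge _ (DList _ G) x * _ = _
          ring
      · rintro ⟨h, l⟩ hz ⟨h', l'⟩ hz' hne
        simp only [Finset.coe_filter, Set.mem_ofPred_eq, mem_antidiag] at hz hz'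
        refine Finset.disjoint_left.2 fun P hP hP' => hne ?_
        simp only [Finset.mem_image] at hP hP'
        obtain ⟨P₁, -, rfl⟩ := hP
        obtain ⟨P₂, -, h2⟩ := hP'
        have hh : h' = h := by simpa using (List.cons.inj h2).1
        subst hh
        have hl : l = l' := add_left_cancel (hz.1.trans hz'.1.symm)
        rw [hl]
    · intro q _ q' _ hne
      refine Finset.disjoint_left.2 fun P hP hP' => hne ?_
      simp only [Finset.mem_biUnion, Finset.mem_image] at hP hP'
      obtain ⟨_, -, P₁, -, rfl⟩ := hP
      obtain ⟨_, -, P₂, -, h2⟩ := hP'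
      exact (congrArg Prod.fst (List.cons.inj h2).1).symm

theorem liftNL_node {d : ℕ} {Fam : ℝ → NLf d} (hFam : IsExtNonlin Fam) (U : Jet d) (a : ℝ)
    (k : Nd d) (L : List (Nd d)) (B : List (Nd d × Tr d)) :
    liftNL Fam U (Tr.node a k L B) =
      (B.map fun y => U.r (plant0 y.2)).prod *
        paPow k (DList ((B.map fun y => ((Typ.In, y.1) : ET d)) ++
          L.map fun l => ((Typ.Xi, l) : ET d)) (Fam a)) U.toE := by
  obtain ⟨S, hS⟩ : ∃ S, NLOn S (Fam a) := hFam.2.2 a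
  set os := (B.map fun y => ((Typ.In, y.1) : ET d)) ++ L.map fun l => ((Typ.Xi, l) : ET d)
    with hos
  have hG := hS.dList os
  rw [paPow_eq_taylorCoeff hG]
  simp only [liftNL, List.append_assoc, ← hos, DList_append _ os]
  rw [finsum_mem_eq_sum_of_subset (M := ℝ)
    (t := (Finset.range (∑ i, k i + 1)).biUnion fun n => pairLists (inIdx S) n k)]
  · rw [Finset.sum_biUnion]
    · rw [taylorCoeff, Pi.smul_apply, Finset.sum_apply, smul_eq_mul,
        mul_left_comm (List.prod _)]
      congr 1
      rw [Finset.mul_sum]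
      refine Finset.sum_congr rfl fun n _ => ?_
      rw [Pi.smul_apply, ← sum_pairLists hG, smul_eq_mul, Finset.mul_sum, Finset.mul_sum]
      refine Finset.sum_congr rfl fun P hP => ?_
      rw [(mem_pairLists.1 hP).1]
      simp only [Jet.toE]
      ring
    · intro n _ n' _ hne
      refine Finset.disjoint_left.2 fun P hP hP' => hne ?_
      rw [← (mem_pairLists.1 hP).1, (mem_pairLists.1 hP').1]
  · rintro P ⟨⟨hlt, hs⟩, hsupp⟩
    simp only [Finset.coe_biUnion, Set.mem_iUnion, Finset.mem_coe, Finset.mem_range]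
    refine ⟨P.length, Nat.lt_succ_of_le (length_le_of_sum_eq hlt hs),
      mem_pairLists.2 ⟨rfl, fun x hx => ?_, hlt, hs⟩⟩
    by_contra hQ
    apply hsupp
    have h0 : DList (P.map fun z => ((Typ.In, z.1) : ET d)) (DList os (Fam a)) = 0 :=
      hG.dList_eq_zero (List.mem_map.2 ⟨x, hx, rfl⟩) fun h => hQ (mem_inIdx.2 h)
    simp [h0]
  · intro P hP
    simp only [Finset.coe_biUnion, Set.mem_iUnion, Finset.mem_coe] at hP
    obtain ⟨n, -, hP⟩ := hP
    exact (mem_pairLists.1 hP).2.2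

theorem UpsB_eq_prod {d : ℕ} (Fam : ℝ → NLf d) (B : List (Nd d × Tr d)) (x : ET d → ℝ) :
    UpsB Fam B x = (B.map fun y => Ups Fam y.2 x).prod := by
  induction B with
  | nil => simp [UpsB]
  | cons y ys ih => simp [UpsB, ih]

theorem Ups_node {d : ℕ} (Fam : ℝ → NLf d) (a : ℝ) (k : Nd d) (L : List (Nd d))
    (B : List (Nd d × Tr d)) (x : ET d → ℝ) :
    Ups Fam (Tr.node a k L B) x = (B.map fun y => Ups Fam y.2 x).prod *
      paPow k (DList ((B.map fun y => ((Typ.In, y.1) : ET d)) ++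
        L.map fun l => ((Typ.Xi, l) : ET d)) (Fam a)) x := by
  rw [← UpsB_eq_prod, Ups]

theorem Ups_eq_of_liftNL {d : ℕ} {Fam : ℝ → NLf d} (hFam : IsExtNonlin Fam) {U : Jet d}
    (hU : ∀ τ : Tr d, U.r (plant0 τ) = liftNL Fam U τ) :
    ∀ τ : Tr d, U.r (plant0 τ) = Ups Fam τ U.toE
  | .node a k L B => by
    rw [hU, liftNL_node hFam, Ups_node]
    congr 2
    refine List.map_congr_left fun y hy => ?_
    exact Ups_eq_of_liftNL hFam hU y.2
termination_by τ => sizeOf τ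
decreasing_by
  have h1 := List.sizeOf_lt_of_mem hy
  have h2 : sizeOf y.2 < sizeOf y := by
    cases y
    simp
  simp
  omega

/-- A jet `U` solves the algebraic fixed point equation
`U = U^P + 𝓘_0[𝐅(U)]` if and only if it is coherent with `𝐅`. -/
theorem fixed_point_iff_coherent
    (hd : 0 < d) (Fam : ℝ → NLf d) (hFam : IsExtNonlin Fam) (U : Jet d) :
    SolvesFP Fam U ↔ Coherent Fam U := by
  refine and_congr_right fun _ => ⟨Ups_eq_of_liftNL hFam, fun hU τ => ?_⟩
  obtain ⟨a, k, L, B⟩ := τ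
  rw [hU, liftNL_node hFam, Ups_node]
  simp only [hU]

end RS
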